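/- (Clausen-type identity) Let β₁, β₂ be real numbers with β₁ > 0 and β₂ > 0, and let Λ₁ be a real number with 0 < Λ₁ < √2 − 1, and set z₁ = −4Λ₁²/(1−Λ₁²)² (so |z₁| < 1). Then ₃F₂(β₁+β₂−1/2, β₁, β₁−β₂+1/2; 2β₁, β₁+1/2; z₁) = (1−Λ₁²)^{2β₁+2β₂−1} · ( ₂F₁(β₁+β₂−1/2, β₂; β₁+1/2; Λ₁²) )². -/

import Mathlib

/-- Pochhammer symbol `(x)_n` in `ℝ`. -/
noncomputable def rpoch (x : ℝ) (n : ℕ) : ℝ := (ascPochhammer ℝ n).eval x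

/-- Gauss' hypergeometric series `₂F₁` (real). -/
noncomputable def hyp2F1 (a b c z : ℝ) : ℝ :=
  ∑' n : ℕ, rpoch a n * rpoch b n / (rpoch c n * (n.factorial : ℝ)) * z ^ n

/-- Generalized hypergeometric series `₃F₂` (real). -/
noncomputable def hyp3F2 (a₁ a₂ a₃ b₁ b₂ z : ℝ) : ℝ :=
  ∑' n : ℕ, rpoch a₁ n * rpoch a₂ n * rpoch a₃ n /
    (rpoch b₁ n * rpoch b₂ n * (n.factorial : ℝ)) * z ^ n

lemma rpoch_zero (x : ℝ) : rpoch x 0 = 1 := by simp [rpoch]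

lemma rpoch_succ (x : ℝ) (n : ℕ) : rpoch x (n + 1) = rpoch x n * (x + n) := by
  simp [rpoch, ascPochhammer_succ_eval]

lemma rpoch_pos {x : ℝ} (hx : 0 < x) (n : ℕ) : 0 < rpoch x n := by
  induction n with
  | zero => simp [rpoch_zero]
  | succ n ih => rw [rpoch_succ]; positivity

lemma rpoch_add (x : ℝ) (n k : ℕ) : rpoch x (n + k) = rpoch x n * rpoch (x + n) k := by
  induction k with
  | zero => simp [rpoch_zero]
  | succ k ih => rw [← add_assoc, rpoch_succ, ih, rpoch_succ]; push_cast; ring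

lemma rpoch_succ_left (x : ℝ) (n : ℕ) : rpoch x (n + 1) = x * rpoch (x + 1) n := by
  rw [add_comm, rpoch_add]
  have h : rpoch x 1 = x := by
    have := rpoch_succ x 0
    simpa [rpoch_zero] using this
  rw [h]; simp

lemma rpoch_dup (a : ℝ) (n : ℕ) :
    rpoch (2 * a) (2 * n) = 4 ^ n * rpoch a n * rpoch (a + 1 / 2) n := by
  induction n with
  | zero => simp [rpoch_zero]
  | succ n ih =>
    have : 2 * (n + 1) = 2 * n + 1 + 1 := by ring
    rw [this, rpoch_succ, rpoch_succ, ih, rpoch_succ, rpoch_succ]; push_cast; ring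

lemma rpoch_abs_le (x y : ℝ) (h : |x| ≤ y) (n : ℕ) : |rpoch x n| ≤ rpoch y n := by
  induction n with
  | zero => simp [rpoch_zero]
  | succ n ih =>
    rw [rpoch_succ, rpoch_succ, abs_mul]
    have h2 : |x + n| ≤ y + n := by
      calc |x + n| ≤ |x| + |(n : ℝ)| := abs_add_le _ _
        _ ≤ _ := by rw [Nat.abs_cast]; linarith
    exact mul_le_mul ih h2 (abs_nonneg _) ((abs_nonneg _).trans ih)

/-- Summand of the Saalschütz sum. -/
noncomputable def saalT (a b : ℝ) (m n : ℕ) : ℝ :=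
  (-1) ^ n * rpoch (2 * a + m) n * rpoch b n * (m.choose n : ℝ) /
    (rpoch (a + b + 1 / 2) n * rpoch (a + 1 / 2) n)

lemma saal_partial (a b : ℝ) (ha : 0 < a + 1 / 2) (hc : 0 < a + b + 1 / 2) (m N : ℕ) :
    ∑ n ∈ Finset.range (N + 1), ((a + b + 1 / 2 + m) * saalT a b (m + 1) n
      - (a - b + 1 / 2 + m) * saalT a b m n) =
    2 * (-1) ^ N * rpoch (2 * a + m + 1) N * rpoch b (N + 1) * (m.choose N : ℝ) /
      (rpoch (a + b + 1 / 2) N * rpoch (a + 1 / 2) N) := by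
  induction N with
  | zero => simp [saalT, rpoch_zero, rpoch_succ]; ring
  | succ N ih =>
    rw [Finset.sum_range_succ, ih]
    simp only [saalT]
    have h1 := (rpoch_pos ha N).ne'
    have h2 := (rpoch_pos hc N).ne'
    have h3 : a + 1 / 2 + N ≠ 0 := by positivity
    have h4 : a + b + 1 / 2 + N ≠ 0 := by positivity
    have e1 : (((m + 1).choose (N + 1) : ℕ) : ℝ) = m.choose N + m.choose (N + 1) := by
      rw [Nat.choose_succ_succ]; push_cast; ring
    have e2 : ((m.choose (N + 1) : ℕ) : ℝ) * (N + 1) = m.choose N * (m - N) := by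
      rcases le_or_gt N m with h | h
      · have := Nat.choose_succ_right_eq m N
        have h' := congrArg (Nat.cast : ℕ → ℝ) this
        push_cast [Nat.cast_sub h] at h'
        exact h'
      · rw [Nat.choose_eq_zero_of_lt h, Nat.choose_eq_zero_of_lt (by omega)]; simp
    have e3 : ((m.choose (N + 1) : ℕ) : ℝ) = m.choose N * (m - N) / (N + 1) := by
      rw [← e2]; field_simp
    rw [e1, e3]
    have e4 : (2 * a + ((m + 1 : ℕ) : ℝ)) = 2 * a + m + 1 := by push_cast; ring
    rw [e4, rpoch_succ_left (2 * a + m) N, rpoch_succ (2 * a + m + 1), rpoch_succ b (N + 1),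
      rpoch_succ (a + 1 / 2), rpoch_succ (a + b + 1 / 2)]
    generalize rpoch (2 * a + m + 1) N = p1
    generalize rpoch b (N + 1) = p2
    generalize rpoch (a + 1 / 2) N = p3 at *
    generalize rpoch (a + b + 1 / 2) N = p4 at *
    rw [pow_succ]
    generalize ((-1 : ℝ)) ^ N = p5
    generalize ((m.choose N : ℕ) : ℝ) = p6
    push_cast
    have h5 : (N : ℝ) + 1 ≠ 0 := by positivity
    clear ih e1 e2 e3 e4
    generalize (N : ℝ) = u at *
    generalize (m : ℝ) = v at *
    generalize hE : a + 1 / 2 + u = E at *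
    generalize hF : a + b + 1 / 2 + u = F at *
    have hb : b = F - E := by linarith
    have ha' : a = E - 1 / 2 - u := by linarith
    subst hb
    subst ha'
    field_simp
    ring

lemma saal_sum (a b : ℝ) (ha : 0 < a + 1 / 2) (hc : 0 < a + b + 1 / 2) (m : ℕ) :
    ∑ n ∈ Finset.range (m + 1), saalT a b m n =
      rpoch (a - b + 1 / 2) m / rpoch (a + b + 1 / 2) m := by
  induction m with
  | zero => simp [saalT, rpoch_zero]
  | succ m ih =>
    have h := saal_partial a b ha hc m (m + 1)
    rw [Nat.choose_succ_self, Finset.sum_sub_distrib, ← Finset.mul_sum, ← Finset.mul_sum,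
      Finset.sum_range_succ (fun n => saalT a b m n) (m + 1), ih] at h
    have h0 : saalT a b m (m + 1) = 0 := by simp [saalT]
    rw [h0] at h
    have h2 := (rpoch_pos hc m).ne'
    have h4 : a + b + 1 / 2 + m ≠ 0 := by positivity
    rw [rpoch_succ, rpoch_succ, eq_div_iff (by positivity)]
    simp only [Nat.cast_zero, mul_zero, zero_div, add_zero] at h
    have h6 := sub_eq_zero.mp h
    rw [mul_comm (rpoch (a + b + 1 / 2) m), ← mul_assoc, mul_comm (∑ n ∈ _, _), h6,
      mul_div_assoc', div_mul_cancel₀ _ h2, mul_comm]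

/-- Coefficient of Gauss' series. -/
noncomputable def hc (a b c : ℝ) (n : ℕ) : ℝ :=
  rpoch a n * rpoch b n / (rpoch c n * (n.factorial : ℝ))

lemma coeff_transform (a b : ℝ) (ha : 0 < a + 1 / 2) (hcc : 0 < a + b + 1 / 2) (m : ℕ) :
    ∑ p ∈ Finset.HasAntidiagonal.antidiagonal m, hc a b (a + b + 1 / 2) p.1 * (-4) ^ p.1 *
      (rpoch (2 * a + 2 * p.1) p.2 / (p.2.factorial : ℝ)) =
    hc (2 * a) (a - b + 1 / 2) (a + b + 1 / 2) m := by
  have key : ∀ p ∈ Finset.HasAntidiagonal.antidiagonal m, hc a b (a + b + 1 / 2) p.1 * (-4) ^ p.1 *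
      (rpoch (2 * a + 2 * p.1) p.2 / (p.2.factorial : ℝ)) =
      rpoch (2 * a) m / m.factorial * saalT a b m p.1 := by
    rintro ⟨n, k⟩ hp
    obtain rfl : n + k = m := by simpa using hp
    simp only [hc, saalT]
    have e1 : rpoch (2 * a) (n + k) * rpoch (2 * a + ((n + k : ℕ) : ℝ)) n =
        4 ^ n * rpoch a n * rpoch (a + 1 / 2) n * rpoch (2 * a + 2 * n) k := by
      rw [← rpoch_add, ← rpoch_dup, show n + k + n = 2 * n + k by ring, rpoch_add]
      push_cast; ring
    have e2 : (((n + k).choose n : ℕ) : ℝ) * n.factorial * k.factorial = (n + k).factorial := by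
      have := Nat.choose_mul_factorial_mul_factorial (Nat.le_add_right n k)
      rw [Nat.add_sub_cancel_left] at this
      exact_mod_cast this
    have h1 := (rpoch_pos ha n).ne'
    have h2 := (rpoch_pos hcc n).ne'
    have f1 : (n.factorial : ℝ) ≠ 0 := by positivity
    have f2 : (k.factorial : ℝ) ≠ 0 := by positivity
    have f3 : ((n + k).factorial : ℝ) ≠ 0 := by positivity
    have e3 : (((n + k).choose n : ℕ) : ℝ) = (n + k).factorial / (n.factorial * k.factorial) := by
      rw [← e2]; field_simp
    have e4 : ((-4 : ℝ)) ^ n = (-1) ^ n * 4 ^ n := by rw [← mul_pow]; norm_num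
    rw [e3, e4]
    have : rpoch (2 * a) (n + k) / (n + k).factorial * ((-1) ^ n *
        rpoch (2 * a + ((n + k : ℕ) : ℝ)) n * rpoch b n *
        ((n + k).factorial / (n.factorial * k.factorial)) /
        (rpoch (a + b + 1 / 2) n * rpoch (a + 1 / 2) n)) =
        (rpoch (2 * a) (n + k) * rpoch (2 * a + ((n + k : ℕ) : ℝ)) n) * ((-1) ^ n * rpoch b n *
        (1 / (n.factorial * k.factorial)) /
        (rpoch (a + b + 1 / 2) n * rpoch (a + 1 / 2) n)) := by
      field_simp
    rw [this, e1]
    generalize rpoch (a + b + 1 / 2) n = q1 at *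
    generalize rpoch (a + 1 / 2) n = q2 at *
    field_simp
  rw [Finset.sum_congr rfl key, ← Finset.mul_sum,
    Finset.Nat.sum_antidiagonal_eq_sum_range_succ_mk]
  simp only
  rw [saal_sum a b ha hcc, hc]
  ring

section
open PowerSeries

/-- Euler operator `X d/dX`. -/
noncomputable def eulerOp (f : ℝ⟦X⟧) : ℝ⟦X⟧ := X * derivative ℝ f

lemma eulerOp_coeff (f : ℝ⟦X⟧) (n : ℕ) : coeff n (eulerOp f) = n * coeff n f := by
  cases n with
  | zero => simp [eulerOp]
  | succ n => simp only [eulerOp, coeff_succ_X_mul, coeff_derivative]; push_cast; ring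

lemma eulerOp_mul (f g : ℝ⟦X⟧) : eulerOp (f * g) = eulerOp f * g + f * eulerOp g := by
  simp only [eulerOp, Derivation.leibniz, smul_eq_mul]; ring

lemma eulerOp_add (f g : ℝ⟦X⟧) : eulerOp (f + g) = eulerOp f + eulerOp g := by
  simp only [eulerOp, map_add]; ring

lemma eulerOp_sub (f g : ℝ⟦X⟧) : eulerOp (f - g) = eulerOp f - eulerOp g := by
  simp only [eulerOp, map_sub]; ring

lemma eulerOp_X : eulerOp X = X := by simp [eulerOp]

lemma eulerOp_C (r : ℝ) : eulerOp (C r) = 0 := by simp [eulerOp]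

lemma eulerOp_zero : eulerOp 0 = 0 := by simp [eulerOp]

lemma clausen_ode (h K S P : ℝ⟦X⟧) (hK : eulerOp K = 0) (hS : eulerOp S = 0)
    (hP : eulerOp P = 0) (hKS : 2 * K = 2 * S - 1)
    (D0 : eulerOp (eulerOp h) + K * eulerOp h -
      X * (eulerOp (eulerOp h) + S * eulerOp h + P * h) = 0) :
    eulerOp (eulerOp (eulerOp (h * h))) + 3 * (K * eulerOp (eulerOp (h * h))) +
      2 * (K * (K * eulerOp (h * h))) -
      X * (eulerOp (eulerOp (eulerOp (h * h))) + 3 * (S * eulerOp (eulerOp (h * h)))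
        + (2 * (S * (S * eulerOp (h * h))) + 4 * (P * eulerOp (h * h)))
        + 4 * (P * (S * (h * h)))) = 0 := by
  have D1 := congrArg eulerOp D0
  simp only [eulerOp_mul, eulerOp_add, eulerOp_sub, eulerOp_X, eulerOp_zero, hK, hS, hP] at D1
  simp only [eulerOp_mul, eulerOp_add]
  linear_combination (2 * h) * D1 + (6 * eulerOp h + 4 * K * h) * D0 +
    2 * X * h * (eulerOp (eulerOp h) + S * eulerOp h + P * h) * hKS

lemma clausen_coeff (a b : ℝ) (hab : 0 < a + b) (m : ℕ) :
    ∑ p ∈ Finset.HasAntidiagonal.antidiagonal m,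
      hc a b (a + b + 1 / 2) p.1 * hc a b (a + b + 1 / 2) p.2 =
    rpoch (2 * a) m * rpoch (a + b) m * rpoch (2 * b) m /
      (rpoch (2 * (a + b)) m * rpoch (a + b + 1 / 2) m * (m.factorial : ℝ)) := by
  have hcc : 0 < a + b + 1 / 2 := by positivity
  have rech : ∀ n : ℕ, hc a b (a + b + 1 / 2) (n + 1) * ((n + 1) * (a + b + 1 / 2 + n)) =
      (a + n) * (b + n) * hc a b (a + b + 1 / 2) n := by
    intro n
    simp only [hc, rpoch_succ, Nat.factorial_succ]
    have h2 := (rpoch_pos hcc n).ne'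
    have h4 : a + b + 1 / 2 + n ≠ 0 := by positivity
    generalize a + b + 1 / 2 + n = E at *
    push_cast
    field_simp
  obtain ⟨h, hh⟩ : ∃ h : ℝ⟦X⟧, h = PowerSeries.mk (hc a b (a + b + 1 / 2)) := ⟨_, rfl⟩
  have hco : ∀ n, coeff n h = hc a b (a + b + 1 / 2) n := by intro n; simp [hh]
  have D0 : eulerOp (eulerOp h) + C (a + b - 1 / 2) * eulerOp h -
      X * (eulerOp (eulerOp h) + C (a + b) * eulerOp h + C (a * b) * h) = 0 := by
    ext n
    cases n with
    | zero =>
      rw [map_sub, map_add, coeff_C_mul, coeff_zero_X_mul]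
      simp only [eulerOp_coeff]; simp
    | succ n =>
      rw [map_sub, map_add (coeff (n + 1)), coeff_C_mul, coeff_succ_X_mul, map_add (coeff n),
        map_add (coeff n), coeff_C_mul, coeff_C_mul]
      simp only [eulerOp_coeff, hco, map_zero]
      push_cast
      linear_combination rech n
  have hKS : (2 : ℝ⟦X⟧) * C (a + b - 1 / 2) = 2 * C (a + b) - 1 := by
    rw [show (2 : ℝ⟦X⟧) = C 2 from (map_ofNat C 2).symm, show (1 : ℝ⟦X⟧) = C 1 by simp, ← map_mul, ← map_mul,
      ← map_sub]
    congr 1; ring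
  have L := clausen_ode h _ _ _ (eulerOp_C _) (eulerOp_C _) (eulerOp_C _) hKS D0
  have rec3 : ∀ n : ℕ, (n + 1 : ℝ) * (n + 2 * (a + b)) * (n + (a + b + 1 / 2)) *
      coeff (n + 1) (h * h) = (n + 2 * a) * (n + 2 * b) * (n + a + b) * coeff n (h * h) := by
    intro n
    have := congrArg (coeff (n + 1)) L
    have t2 : (2 : ℝ⟦X⟧) = C 2 := (map_ofNat C 2).symm
    have t3 : (3 : ℝ⟦X⟧) = C 3 := (map_ofNat C 3).symm
    have t4 : (4 : ℝ⟦X⟧) = C 4 := (map_ofNat C 4).symm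
    rw [t2, t3, t4, map_sub, coeff_succ_X_mul] at this
    simp only [map_add (coeff _), coeff_C_mul, eulerOp_coeff, map_zero] at this
    push_cast at this
    linear_combination this
  have main : coeff m (h * h) = rpoch (2 * a) m * rpoch (a + b) m * rpoch (2 * b) m /
      (rpoch (2 * (a + b)) m * rpoch (a + b + 1 / 2) m * (m.factorial : ℝ)) := by
    induction m with
    | zero =>
      rw [coeff_mul]; simp [hco, hc, rpoch_zero]
    | succ n ih =>
      have r := rec3 n
      rw [ih] at r
      simp only [rpoch_succ, Nat.factorial_succ]
      have h1 := (rpoch_pos hcc n).ne'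
      have h2 := (rpoch_pos (show 0 < 2 * (a + b) by positivity) n).ne'
      have h3 : (n : ℝ) + (a + b + 1 / 2) ≠ 0 := by positivity
      have h4 : (n : ℝ) + 2 * (a + b) ≠ 0 := by positivity
      have h5 : (n : ℝ) + 1 ≠ 0 := by positivity
      have h6 : (n.factorial : ℝ) ≠ 0 := by positivity
      rw [add_comm (a + b + 1 / 2) (n : ℝ), add_comm (2 * (a + b)) (n : ℝ)]
      push_cast
      generalize rpoch (a + b + 1 / 2) n = q1 at *
      generalize rpoch (2 * (a + b)) n = q2 at *
      generalize (n : ℝ) + (a + b + 1 / 2) = q3 at *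
      generalize (n : ℝ) + 2 * (a + b) = q4 at *
      generalize (n.factorial : ℝ) = q6 at *
      rw [eq_div_iff (by positivity)]
      have e : coeff (n + 1) (h * h) * (q2 * q4 * (q1 * q3) * ((n + 1) * q6)) =
        ((n + 1 : ℝ) * q4 * q3 * coeff (n + 1) (h * h)) * (q2 * q1 * q6) := by ring
      rw [e, r]
      field_simp
      ring
  rw [← main, coeff_mul]
  simp only [hco]
end

lemma hc_summable (a b c z : ℝ) (hc0 : 0 < c) (hz : |z| < 1) :
    Summable (fun n => |hc a b c n * z ^ n|) := by
  obtain ⟨r, hr1, hr2⟩ := exists_between hz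
  apply summable_of_ratio_norm_eventually_le hr2
  have t1 := tendsto_add_mul_div_add_mul_atTop_nhds a c 1 (one_ne_zero (α := ℝ))
  have t2 := tendsto_add_mul_div_add_mul_atTop_nhds b 1 1 (one_ne_zero (α := ℝ))
  have t3 := (((t1.mul t2).mul_const z).abs).eventually_lt_const
    (show |1 / 1 * (1 / 1) * z| < r by simpa using hr1)
  filter_upwards [t3] with n hn
  have h2 := (rpoch_pos hc0 n).ne'
  have h4 : c + n ≠ 0 := by positivity
  have h5 : (1 : ℝ) + n ≠ 0 := by positivity
  have e : hc a b c (n + 1) * z ^ (n + 1) =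
      ((a + 1 * n) / (c + 1 * n) * ((b + 1 * n) / (1 + 1 * n)) * z) * (hc a b c n * z ^ n) := by
    simp only [hc, rpoch_succ, Nat.factorial_succ]
    push_cast
    rw [add_comm (n : ℝ) 1, one_mul, pow_succ]
    field_simp
  rw [e, abs_mul, Real.norm_eq_abs, Real.norm_eq_abs, abs_mul, abs_abs, abs_abs]
  exact mul_le_mul_of_nonneg_right hn.le (abs_nonneg _)

lemma hasSum_cg {f g : ℕ → ℝ} {a b : ℝ} (h : HasSum f a) (hf : ∀ k, g k = f k) (hb : b = a) :
    HasSum g b := by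
  obtain rfl : g = f := funext hf
  rw [hb]; exact h

lemma binom_hasSum (s x : ℝ) (hx : |x| < 1) :
    HasSum (fun k => rpoch s k / (k.factorial : ℝ) * x ^ k) ((1 - x) ^ (-s)) := by
  have h := (Real.one_div_one_sub_rpow_hasFPowerSeriesOnBall_zero s).hasSum
    (y := x) (by simpa [enorm_eq_nnnorm, ← NNReal.coe_lt_coe] using hx)
  rw [Real.rpow_neg (by linarith [(abs_lt.mp hx).2]), ← one_div]
  simp only [zero_add] at h
  refine hasSum_cg h (fun k => ?_) rfl
  rw [FormalMultilinearSeries.ofScalars_apply_eq, smul_eq_mul, ← Ring.multichoose_eq]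
  have := Ring.factorial_nsmul_multichoose_eq_ascPochhammer s k
  rw [Polynomial.ascPochhammer_smeval_eq_eval, nsmul_eq_mul] at this
  rw [rpoch, ← this]
  field_simp

lemma hyp2F1_transform (a b x : ℝ) (ha : 0 < a + 1 / 2) (hcc : 0 < a + b + 1 / 2)
    (hx0 : 0 < x) (hx1 : x < 1) (hz : 4 * x / (1 - x) ^ 2 < 1) :
    (1 - x) ^ (-(2 * a)) * hyp2F1 a b (a + b + 1 / 2) (-(4 * x) / (1 - x) ^ 2) =
      hyp2F1 (2 * a) (a - b + 1 / 2) (a + b + 1 / 2) x := by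
  have hy : 0 < 1 - x := by linarith
  have hxa : |x| < 1 := by rw [abs_of_pos hx0]; exact hx1
  have hza : |4 * x / (1 - x) ^ 2| < 1 := by rw [abs_of_pos (by positivity)]; exact hz
  have pw : ∀ (t : ℝ) (n : ℕ), (1 - x) ^ (-(t + 2 * n)) =
      (1 - x) ^ (-t) * (1 / (1 - x) ^ 2) ^ n := by
    intro t n
    rw [neg_add, Real.rpow_add hy, Real.rpow_neg hy.le (2 * (n : ℝ)), Real.rpow_mul hy.le,
      Real.rpow_natCast]
    simp
  let F : ℕ × ℕ → ℝ := fun p => hc a b (a + b + 1 / 2) p.1 * (-4) ^ p.1 *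
      (rpoch (2 * a + 2 * p.1) p.2 / (p.2.factorial : ℝ)) * x ^ (p.1 + p.2)
  have rowF : ∀ n, HasSum (fun k => F (n, k))
      ((1 - x) ^ (-(2 * a)) * (hc a b (a + b + 1 / 2) n * (-(4 * x) / (1 - x) ^ 2) ^ n)) := by
    intro n
    have h := (binom_hasSum (2 * a + 2 * n) x hxa).mul_left
      (hc a b (a + b + 1 / 2) n * (-4) ^ n * x ^ n)
    rw [pw] at h
    refine hasSum_cg h (fun k => ?_) ?_
    · simp only [F, pow_add]; ring
    · rw [show -(4 * x) / (1 - x) ^ 2 = (-4) * x * (1 / (1 - x) ^ 2) by ring, mul_pow, mul_pow]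
      ring
  let G : ℕ × ℕ → ℝ := fun p => |hc a b (a + b + 1 / 2) p.1| * 4 ^ p.1 *
      (rpoch (|2 * a| + 2 * p.1) p.2 / (p.2.factorial : ℝ)) * x ^ (p.1 + p.2)
  have rowG : ∀ n, HasSum (fun k => G (n, k))
      ((1 - x) ^ (-|2 * a|) * |hc a b (a + b + 1 / 2) n * (4 * x / (1 - x) ^ 2) ^ n|) := by
    intro n
    have h := (binom_hasSum (|2 * a| + 2 * n) x hxa).mul_left
      (|hc a b (a + b + 1 / 2) n| * 4 ^ n * x ^ n)
    rw [pw] at h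
    refine hasSum_cg h (fun k => ?_) ?_
    · simp only [G, pow_add]; ring
    · rw [abs_mul (hc _ _ _ _), abs_of_pos (show 0 < (4 * x / (1 - x) ^ 2) ^ n by positivity),
        show (4 * x) / (1 - x) ^ 2 = 4 * x * (1 / (1 - x) ^ 2) by ring, mul_pow, mul_pow]
      ring
  have FG : ∀ p, ‖F p‖ ≤ G p := by
    rintro ⟨n, k⟩
    have := rpoch_abs_le (2 * a + 2 * n) (|2 * a| + 2 * n) (by
      refine (abs_add_le _ _).trans ?_
      rw [abs_of_nonneg (show (0 : ℝ) ≤ 2 * n by positivity)]) k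
    simp only [F, G]
    generalize |2 * a| = A at *
    simp only [Real.norm_eq_abs, abs_mul, abs_div, abs_pow, abs_neg, Nat.abs_cast,
      abs_of_pos hx0, abs_of_pos (show (0 : ℝ) < 4 by norm_num)]
    gcongr
  have sG : Summable G := by
    rw [summable_prod_of_nonneg (fun p => (norm_nonneg _).trans (FG p))]
    refine ⟨fun n => (rowG n).summable, ?_⟩
    simp only [fun n => (rowG n).tsum_eq]
    exact (hc_summable a b _ _ hcc hza).mul_left _
  have sF : Summable F := Summable.of_norm_bounded sG FG
  have l1 : ∑' p, F p = (1 - x) ^ (-(2 * a)) *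
      hyp2F1 a b (a + b + 1 / 2) (-(4 * x) / (1 - x) ^ 2) := by
    rw [sF.tsum_prod' (fun n => (rowF n).summable)]
    simp only [fun n => (rowF n).tsum_eq]
    rw [tsum_mul_left]; rfl
  have l2 : ∑' p, F p = hyp2F1 (2 * a) (a - b + 1 / 2) (a + b + 1 / 2) x := by
    rw [← Finset.HasAntidiagonal.sigmaAntidiagonalEquivProd.tsum_eq F]
    have sF' : Summable fun c : (n : ℕ) × (Finset.HasAntidiagonal.antidiagonal n) =>
        F (Finset.HasAntidiagonal.sigmaAntidiagonalEquivProd c) :=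
      (Finset.HasAntidiagonal.sigmaAntidiagonalEquivProd.summable_iff).mpr sF
    rw [sF'.tsum_sigma' (fun n => (hasSum_fintype _).summable)]
    unfold hyp2F1
    congr 1
    funext m
    have := coeff_transform a b ha hcc m
    rw [hc] at this
    rw [← this, tsum_fintype, Finset.sum_mul]
    rw [← Finset.sum_coe_sort (Finset.HasAntidiagonal.antidiagonal m)]
    refine Finset.sum_congr rfl ?_
    rintro ⟨⟨n, k⟩, hp⟩ -
    have hm : n + k = m := by simpa using hp
    simp only [F, Finset.HasAntidiagonal.sigmaAntidiagonalEquivProd_apply, hm]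
  rw [← l1, l2]

lemma hyp2F1_sq (a b z : ℝ) (hab : 0 < a + b) (hz : |z| < 1) :
    hyp2F1 a b (a + b + 1 / 2) z ^ 2 =
      hyp3F2 (2 * a) (a + b) (2 * b) (2 * (a + b)) (a + b + 1 / 2) z := by
  have hs := hc_summable a b (a + b + 1 / 2) z (by positivity) hz
  have := tsum_mul_tsum_eq_tsum_sum_antidiagonal_of_summable_norm (R := ℝ) hs hs
  have e : hyp2F1 a b (a + b + 1 / 2) z = ∑' n, hc a b (a + b + 1 / 2) n * z ^ n := rfl
  rw [sq, e, this, hyp3F2]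
  congr 1
  funext m
  rw [← clausen_coeff a b hab, Finset.sum_mul]
  refine Finset.sum_congr rfl ?_
  rintro ⟨n, k⟩ hp
  have hm : n + k = m := by simpa using hp
  simp only [← hm, pow_add]
  ring

/-- Clausen-type identity for `₃F₂` with the quadric property. -/
theorem statement7 (β₁ β₂ Λ₁ z₁ : ℝ) (hβ₁ : 0 < β₁) (hβ₂ : 0 < β₂)
    (hΛ0 : 0 < Λ₁) (hΛ1 : Λ₁ < Real.sqrt 2 - 1)
    (hz₁ : z₁ = -(4 * Λ₁ ^ 2) / (1 - Λ₁ ^ 2) ^ 2) :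
    hyp3F2 (β₁ + β₂ - 1 / 2) β₁ (β₁ - β₂ + 1 / 2) (2 * β₁) (β₁ + 1 / 2) z₁ =
      (1 - Λ₁ ^ 2) ^ (2 * β₁ + 2 * β₂ - 1) *
      (hyp2F1 (β₁ + β₂ - 1 / 2) β₂ (β₁ + 1 / 2) (Λ₁ ^ 2)) ^ (2 : ℕ) := by
  have hs : Real.sqrt 2 ^ 2 = 2 := Real.sq_sqrt (by norm_num)
  have hs0 : 0 ≤ Real.sqrt 2 := Real.sqrt_nonneg 2
  have hq : Λ₁ ^ 2 + 2 * Λ₁ < 1 := by nlinarith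
  have hx1 : Λ₁ ^ 2 < 1 := by linarith
  have hy : 0 < 1 - Λ₁ ^ 2 := by linarith
  have hz : 4 * Λ₁ ^ 2 / (1 - Λ₁ ^ 2) ^ 2 < 1 := by
    rw [div_lt_one (by positivity)]
    nlinarith
  obtain ⟨a, ha⟩ : ∃ a, a = (β₁ + β₂ - 1 / 2) / 2 := ⟨_, rfl⟩
  obtain ⟨b, hb⟩ : ∃ b, b = (β₁ - β₂ + 1 / 2) / 2 := ⟨_, rfl⟩
  have e1 : β₁ + β₂ - 1 / 2 = 2 * a := by rw [ha]; ring
  have e2 : β₁ - β₂ + 1 / 2 = 2 * b := by rw [hb]; ring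
  have e3 : β₁ = a + b := by rw [ha, hb]; ring
  have e4 : β₂ = a - b + 1 / 2 := by rw [ha, hb]; ring
  have e5 : 2 * β₁ + 2 * β₂ - 1 = 2 * a + 2 * a := by rw [ha]; ring
  have T := hyp2F1_transform a b (Λ₁ ^ 2) (by rw [ha]; linarith) (by linarith) (by positivity)
    hx1 hz
  have za : |z₁| < 1 := by
    rw [hz₁, neg_div, abs_neg, abs_of_pos (by positivity)]; exact hz
  have Q := hyp2F1_sq a b z₁ (by linarith) za
  rw [e5, e1, e2]
  clear ha hb e1 e2 e5
  subst e3
  subst e4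
  rw [← Q, ← T, hz₁, Real.rpow_add hy, Real.rpow_neg hy.le]
  have := (Real.rpow_pos_of_pos hy (2 * a)).ne'
  field_simp
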